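/- If S_1, …, S_n are pairwise non-isomorphic simple left H-modules, then the sum C(S_1) + ⋯ + C(S_n) of their matrix coefficient spaces inside H* is a direct sum (i.e., the subspaces C(S_i) are linearly independent). -/

import Mathlib

/-!
The functionals in `C(V)` see the action of `H` on only finitely many vectors of `V`: for
`φ ∈ C(V)` there is a finite `T ⊆ V` such that `φ (h * r) = c * φ h` whenever `r ∈ H` acts on `T`
as the scalar `c` (`exists_finset_of_mem_matCoeff`).

The semisimple module `M = ∏ i, S i` has `Hom_H(S i, S j) = 0` for `i ≠ j` by Schur's lemma, so the
projection of `M` onto a factor `S i` commutes with `End_H(M)`. By the Jacobson density theorem it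
agrees on any prescribed finite set with the action of some `r ∈ H`; that is, `r` acts as the
identity on finitely many vectors of `S i` and kills finitely many vectors of each other `S j`
(`exists_smul_eq_self_and_smul_eq_zero`).

Given a relation `∑ j, φ j = 0` with `φ j ∈ C(S j)`, evaluating it at `h * r` for such an `r` leaves
`φ i h = 0`.
-/


noncomputable section

/-- The action of `H` on `v`, as a `k`-linear map `H →ₗ[k] V`. -/
def actOn (k H V : Type*) [Field k] [Ring H] [Algebra k H]
    [AddCommGroup V] [Module k V] [Module H V] [IsScalarTower k H V] (v : V) :
    H →ₗ[k] V where
  toFun h := h • v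
  map_add' h h' := add_smul h h' v
  map_smul' c h := by simpa using smul_assoc c h v

/-- The matrix coefficient space `C(V) ⊆ H* = Hom_k(H, k)`: the span of the
functionals `h ↦ f (h • v)` for `v : V`, `f : V →ₗ[k] k`. -/
def matCoeff (k H V : Type*) [Field k] [Ring H] [Algebra k H]
    [AddCommGroup V] [Module k V] [Module H V] [IsScalarTower k H V] :
    Submodule k (H →ₗ[k] k) :=
  Submodule.span k {φ | ∃ (v : V) (f : V →ₗ[k] k), φ = f ∘ₗ actOn k H V v}

universe u v

/-- A matrix coefficient only depends on the action on finitely many vectors: right multiplication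
by an `r` acting on these vectors as a scalar `c` multiplies the functional by `c`. -/
theorem exists_finset_of_mem_matCoeff {k H V : Type*} [Field k] [Ring H] [Algebra k H]
    [AddCommGroup V] [Module k V] [Module H V] [IsScalarTower k H V] {φ : H →ₗ[k] k}
    (hφ : φ ∈ matCoeff k H V) :
    ∃ T : Finset V, ∀ (c : k) (r : H), (∀ v ∈ T, r • v = c • v) →
      ∀ h, φ (h * r) = c * φ h := by
  classical
  induction hφ using Submodule.span_induction with
  | mem φ hφ =>
    obtain ⟨v, f, rfl⟩ := hφ
    refine ⟨{v}, fun c r hr h => ?_⟩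
    have hv : r • v = c • v := hr v (Finset.mem_singleton_self v)
    have hcomm : h • c • v = c • h • v := by
      rw [← algebraMap_smul H c v, ← algebraMap_smul H c (h • v), smul_smul, smul_smul,
        Algebra.commutes]
    change f ((h * r) • v) = c * f (h • v)
    rw [mul_smul, hv, hcomm, map_smul, smul_eq_mul]
  | zero => exact ⟨∅, fun c r _ h => by simp⟩
  | add φ ψ _ _ hφ hψ =>
    obtain ⟨T, hT⟩ := hφ
    obtain ⟨U, hU⟩ := hψ
    refine ⟨T ∪ U, fun c r hr h => ?_⟩
    rw [LinearMap.add_apply, LinearMap.add_apply,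
      hT c r (fun v hv => hr v (Finset.mem_union_left U hv)),
      hU c r (fun v hv => hr v (Finset.mem_union_right T hv)), mul_add]
  | smul a φ _ hφ =>
    obtain ⟨T, hT⟩ := hφ
    refine ⟨T, fun c r hr h => ?_⟩
    rw [LinearMap.smul_apply, LinearMap.smul_apply, hT c r hr, smul_eq_mul, smul_eq_mul,
      mul_left_comm]

/-- For pairwise non-isomorphic simple modules, the projection of the product onto one factor
lies in the centre of the endomorphism ring. -/
theorem single_proj_comm {R ι : Type*} [Ring R] [DecidableEq ι] [Finite ι] {S : ι → Type*}
    [∀ i, AddCommGroup (S i)] [∀ i, Module R (S i)] [∀ i, IsSimpleModule R (S i)]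
    (hnoniso : ∀ i j, i ≠ j → IsEmpty (S i ≃ₗ[R] S j)) (i : ι) (e : Module.End R (∀ i, S i)) :
    (LinearMap.single R S i ∘ₗ LinearMap.proj i) ∘ₗ e =
      e ∘ₗ (LinearMap.single R S i ∘ₗ LinearMap.proj i) := by
  have schur : ∀ j l, j ≠ l → ∀ x, e (Pi.single j x) l = 0 := by
    intro j l hjl x
    let g : S j →ₗ[R] S l := LinearMap.proj l ∘ₗ e ∘ₗ LinearMap.single R S j
    rcases g.bijective_or_eq_zero with hg | hg
    · exact ((hnoniso j l hjl).false (LinearEquiv.ofBijective g hg)).elim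
    · exact LinearMap.congr_fun hg x
  refine LinearMap.pi_ext fun j x => ?_
  change Pi.single i (e (Pi.single j x) i) = e (Pi.single i ((Pi.single j x : ∀ i, S i) i))
  by_cases hji : j = i
  · subst hji
    rw [Pi.single_eq_same]
    ext l
    by_cases hl : l = j
    · subst hl
      rw [Pi.single_eq_same]
    · rw [Pi.single_eq_of_ne hl, schur j l (Ne.symm hl)]
  · rw [schur j i hji, Pi.single_eq_of_ne (Ne.symm hji), Pi.single_zero, map_zero]

/-- Density for a finite family of pairwise non-isomorphic simple modules: some ring element acts
as the identity on finitely many given vectors of `S i` and as zero on finitely many given vectors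
of every other `S j`. -/
theorem exists_smul_eq_self_and_smul_eq_zero {R ι : Type*} [Ring R] [Fintype ι] {S : ι → Type*}
    [∀ i, AddCommGroup (S i)] [∀ i, Module R (S i)] [∀ i, IsSimpleModule R (S i)]
    (hnoniso : ∀ i j, i ≠ j → IsEmpty (S i ≃ₗ[R] S j)) (i : ι) (T : ∀ j, Finset (S j)) :
    ∃ r : R, (∀ v ∈ T i, r • v = v) ∧ ∀ j, j ≠ i → ∀ v ∈ T j, r • v = 0 := by
  classical
  let p : Module.End R (∀ i, S i) := LinearMap.single R S i ∘ₗ LinearMap.proj i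
  let f : Module.End (Module.End R (∀ i, S i)) (∀ i, S i) :=
    { toFun := p
      map_add' := p.map_add
      map_smul' := fun e m => LinearMap.congr_fun (single_proj_comm hnoniso i e) m }
  obtain ⟨r, hr⟩ := jacobson_density f
    (Finset.univ.biUnion fun j => (T j).image (Pi.single j : S j → ∀ i, S i))
  have hr' : ∀ j, ∀ v ∈ T j, r • v = (Pi.single i ((Pi.single j v : ∀ i, S i) i) : ∀ i, S i) j := by
    intro j v hv
    have h := congrFun (hr (Pi.single j v) (Finset.mem_biUnion.2
      ⟨j, Finset.mem_univ j, Finset.mem_image_of_mem _ hv⟩)) j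
    rw [Pi.smul_apply, Pi.single_eq_same] at h
    exact h.symm
  refine ⟨r, fun v hv => ?_, fun j hj v hv => ?_⟩
  · rw [hr' i v hv, Pi.single_eq_same, Pi.single_eq_same]
  · rw [hr' j v hv, Pi.single_eq_of_ne hj]

/-- the matrix coefficient spaces of pairwise non-isomorphic simple
modules form an independent family of subspaces of `H*`. -/
theorem stmt5 (k H : Type u) [Field k] [Ring H] [Algebra k H]
    (n : ℕ) (S : Fin n → Type v)
    (iS : ∀ i, AddCommGroup (S i)) (mS : ∀ i, Module k (S i))
    (hS : ∀ i, Module H (S i)) (tS : ∀ i, IsScalarTower k H (S i))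
    (hsimple : ∀ i, IsSimpleModule H (S i))
    (hnoniso : ∀ i j, i ≠ j →
      IsEmpty (@LinearEquiv H H _ _ (RingHom.id H) (RingHom.id H) _ _ (S i) (S j)
        _ _ (hS i) (hS j))) :
    iSupIndep (fun i => @matCoeff k H (S i) _ _ _ (iS i) (mS i) (hS i) (tS i)) := by
  rw [iSupIndep_iff_finsetSum_eq_zero_imp_eq_zero]
  intro s φ hφ hsum i hi
  have key : ∀ j, ∃ T : Finset (S j), j ∈ s → ∀ (c : k) (r : H),
      (∀ v ∈ T, r • v = c • v) → ∀ h, φ j (h * r) = c * φ j h := by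
    intro j
    by_cases hj : j ∈ s
    · obtain ⟨T, hT⟩ := exists_finset_of_mem_matCoeff (hφ j hj)
      exact ⟨T, fun _ => hT⟩
    · exact ⟨∅, fun h => absurd h hj⟩
  choose T hT using key
  obtain ⟨r, hr_one, hr_zero⟩ := exists_smul_eq_self_and_smul_eq_zero (R := H) hnoniso i T
  ext h
  have hsum_r : ∑ j ∈ s, φ j (h * r) = 0 := by
    rw [← LinearMap.sum_apply, hsum, LinearMap.zero_apply]
  rw [Finset.sum_eq_single_of_mem i hi] at hsum_r
  · have := hT i hi 1 r (fun v hv => by rw [hr_one v hv, one_smul]) h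
    rw [LinearMap.zero_apply, ← hsum_r, this, one_mul]
  · intro j hj hji
    have := hT j hj 0 r (fun v hv => by rw [hr_zero j hji v hv, zero_smul]) h
    rw [this, zero_mul]
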